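/- Let τ ≥ 1 and n = 2^τ. For l ∈ ℕ, define the one-peer hyper-cube weight matrix W^(l) ∈ ℝ^{n×n} (indices 0, …, n−1) by W^(l)_{ij} = 1/2 if i XOR j = 2^{l mod τ} (bitwise XOR of the binary representations), W^(l)_{ij} = 1/2 if i = j, and 0 otherwise. Then each W^(l) is symmetric and doubly stochastic, and W^(τ−1) W^(τ−2) ⋯ W^(1) W^(0) = (1/n)·11ᵀ, i.e., the matrices W^(0), …, W^(τ−1) have the finite-time consensus property. -/

import Mathlib

open Matrix

/-- A real square matrix is doubly stochastic if its entries are nonnegative and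
every row sum and every column sum equals `1`. -/
def DoublyStochastic {n : ℕ} (W : Matrix (Fin n) (Fin n) ℝ) : Prop :=
  (∀ i j, 0 ≤ W i j) ∧ (∀ i, ∑ j, W i j = 1) ∧ (∀ j, ∑ i, W i j = 1)

/-- `Jmat n = (1/n) · 11ᵀ`, the exact-averaging matrix. -/
noncomputable def Jmat (n : ℕ) : Matrix (Fin n) (Fin n) ℝ :=
  Matrix.of fun _ _ => (n : ℝ)⁻¹

/-- Ordered product `mprod W k = W^(k-1) ⋯ W^(1) W^(0)` (empty product is the identity). -/
noncomputable def mprod {n : ℕ} (W : ℕ → Matrix (Fin n) (Fin n) ℝ) :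
    ℕ → Matrix (Fin n) (Fin n) ℝ
  | 0 => 1
  | k + 1 => W k * mprod W k

/-- The one-peer hyper-cube weight matrix `W^(l)` on `n = 2^τ` nodes (indices `0, …, n-1`):
`W^(l)_{ij} = 1/2` if `i XOR j = 2^(l mod τ)`, `1/2` if `i = j`, and `0` otherwise. -/
noncomputable def cubeW (n τ l : ℕ) : Matrix (Fin n) (Fin n) ℝ :=
  Matrix.of fun i j =>
    if (i : ℕ) ^^^ (j : ℕ) = 2 ^ (l % τ) then 1 / 2
    else if i = j then 1 / 2
    else 0

/-!
Each weight matrix averages the identity with the permutation flipping one bit of the index.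
After `k` rounds the bits `0, …, k - 1` have been averaged over, so the product is uniform on the
pairs `(i, j)` that agree in all higher bits, that is, those with `i ^^^ j < 2 ^ k`. At `k = τ` no
higher bits are left.
-/

section LazyPermutation

variable {ι R : Type*} [DecidableEq ι] [Field R]

variable (R) in
/-- The transition matrix of the lazy walk of a permutation `σ`, which stays put or moves along `σ`
with probability `1 / 2` each. The weight matrices of the hypercube have this form. -/
def lazyPermMatrix (σ : Equiv.Perm ι) : Matrix ι ι R :=
  (1 / 2 : R) • 1 + (1 / 2 : R) • σ.permMatrix R

variable [Fintype ι]

theorem lazyPermMatrix_mem_doublyStochastic [LinearOrder R] [IsStrictOrderedRing R]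
    (σ : Equiv.Perm ι) : lazyPermMatrix R σ ∈ doublyStochastic R ι :=
  convex_doublyStochastic (one_mem _) permMatrix_mem_doublyStochastic
    (by positivity) (by positivity) (add_halves 1)

theorem lazyPermMatrix_mul_apply {κ : Type*} (σ : Equiv.Perm ι) (M : Matrix ι κ R) (i : ι) (j : κ) :
    (lazyPermMatrix R σ * M) i j = (M i j + M (σ i) j) / 2 := by
  rw [lazyPermMatrix, Matrix.add_mul, Matrix.smul_mul, Matrix.smul_mul,
    Matrix.one_mul, PEquiv.toMatrix_toPEquiv_mul]
  simp only [Matrix.add_apply, Matrix.smul_apply, submatrix_apply, id_eq, smul_eq_mul]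
  ring

end LazyPermutation

theorem doublyStochastic_iff_mem {n : ℕ} {W : Matrix (Fin n) (Fin n) ℝ} :
    DoublyStochastic W ↔ W ∈ doublyStochastic ℝ (Fin n) :=
  mem_doublyStochastic_iff_sum.symm

theorem xor_two_pow_lt_two_pow_iff {x k : ℕ} :
    x ^^^ 2 ^ k < 2 ^ k ↔ 2 ^ k ≤ x ∧ x < 2 ^ (k + 1) := by
  have two_pow_pos : 0 < 2 ^ k := Nat.two_pow_pos k
  calc x ^^^ 2 ^ k < 2 ^ k
      ↔ (x ^^^ 2 ^ k) / 2 ^ k = 0 := by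
        rw [Nat.div_eq_zero_iff_lt two_pow_pos]
    _ ↔ x / 2 ^ k = 1 := by
        rw [Nat.xor_div_two_pow, Nat.div_self two_pow_pos, Nat.xor_eq_zero_iff]
    _ ↔ 2 ^ k ≤ x ∧ x < 2 ^ (k + 1) := by
        rw [Nat.div_eq_iff two_pow_pos]
        omega

section Hypercube

variable {τ : ℕ}

/-- The permutation of the `2 ^ τ` indices that flips bit `k` of the binary representation, i.e.
matches each node with its peer along the `k`-th direction of the hypercube. -/
def bitFlip (k : Fin τ) : Equiv.Perm (Fin (2 ^ τ)) :=
  Function.Involutive.toPerm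
    (fun i => ⟨i ^^^ 2 ^ (k : ℕ),
      Nat.xor_lt_two_pow i.isLt (Nat.pow_lt_pow_right one_lt_two k.isLt)⟩)
    fun _ => Fin.ext (Nat.xor_xor_cancel_right ..)

theorem val_bitFlip (k : Fin τ) (i : Fin (2 ^ τ)) :
    (bitFlip k i : ℕ) = i ^^^ 2 ^ (k : ℕ) :=
  rfl

theorem bitFlip_eq_iff {k : Fin τ} {i j : Fin (2 ^ τ)} :
    bitFlip k i = j ↔ (i : ℕ) ^^^ j = 2 ^ (k : ℕ) := by
  rw [Fin.ext_iff, val_bitFlip, ← Nat.xor_right_inj (x := i), Nat.xor_xor_cancel_left, eq_comm]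

theorem bitFlip_ne_self (k : Fin τ) (i : Fin (2 ^ τ)) : bitFlip k i ≠ i := by
  rw [Ne, bitFlip_eq_iff, Nat.xor_self]
  exact (Nat.two_pow_pos _).ne

theorem cubeW_isSymm (n τ l : ℕ) : (cubeW n τ l).IsSymm := by
  ext i j
  simp only [cubeW, transpose_apply, of_apply, Nat.xor_comm, eq_comm]

theorem cubeW_eq_lazyPermMatrix {l : ℕ} {k : Fin τ} (hk : l % τ = k) :
    cubeW (2 ^ τ) τ l = lazyPermMatrix ℝ (bitFlip k) := by
  ext i j
  simp only [cubeW, lazyPermMatrix, hk, ← bitFlip_eq_iff, of_apply, Matrix.add_apply,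
    Matrix.smul_apply, one_apply, PEquiv.toMatrix_apply, Equiv.toPEquiv_apply, Option.mem_some_iff]
  rcases eq_or_ne i j with rfl | i_ne_j
  · simp [bitFlip_ne_self]
  · simp [i_ne_j]

theorem doublyStochastic_cubeW (hτ : 0 < τ) (l : ℕ) :
    DoublyStochastic (cubeW (2 ^ τ) τ l) := by
  rw [doublyStochastic_iff_mem, cubeW_eq_lazyPermMatrix (k := ⟨l % τ, Nat.mod_lt l hτ⟩) rfl]
  exact lazyPermMatrix_mem_doublyStochastic _

theorem mprod_cubeW_apply {k : ℕ} (hk : k ≤ τ) (i j : Fin (2 ^ τ)) :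
    mprod (cubeW (2 ^ τ) τ) k i j = if (i : ℕ) ^^^ j < 2 ^ k then ((2 : ℝ) ^ k)⁻¹ else 0 := by
  induction k generalizing i with
  | zero => simp [mprod, one_apply, Fin.ext_iff]
  | succ k ih =>
    specialize ih (Nat.le_of_succ_le hk)
    have xor_bitFlip : (bitFlip ⟨k, hk⟩ i : ℕ) ^^^ j = (i ^^^ j) ^^^ 2 ^ k := by
      rw [val_bitFlip, Nat.xor_right_comm]
    have halve : ((2 : ℝ) ^ (k + 1))⁻¹ = (2 ^ k)⁻¹ / 2 := by
      rw [pow_succ, mul_inv, div_eq_mul_inv]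
    rw [mprod, cubeW_eq_lazyPermMatrix (k := ⟨k, hk⟩) (Nat.mod_eq_of_lt hk),
      lazyPermMatrix_mul_apply, ih, ih, xor_bitFlip, halve]
    simp only [xor_two_pow_lt_two_pow_iff]
    rcases lt_or_ge ((i : ℕ) ^^^ j) (2 ^ k) with xor_lt | le_xor
    · have xor_lt_succ : (i : ℕ) ^^^ j < 2 ^ (k + 1) :=
        xor_lt.trans (Nat.pow_lt_pow_right one_lt_two k.lt_succ_self)
      simp only [xor_lt, xor_lt.not_ge, xor_lt_succ, false_and, if_true, if_false, add_zero]
    · simp only [le_xor, le_xor.not_gt, true_and, if_false, zero_add, ite_div, zero_div]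

theorem mprod_cubeW_self (τ : ℕ) : mprod (cubeW (2 ^ τ) τ) τ = Jmat (2 ^ τ) := by
  ext i j
  rw [mprod_cubeW_apply le_rfl, if_pos (Nat.xor_lt_two_pow i.isLt j.isLt), Jmat, of_apply,
    Nat.cast_pow, Nat.cast_ofNat]

end Hypercube

theorem stmt6 (τ : ℕ) (hτ : 1 ≤ τ) (n : ℕ) (hn : n = 2 ^ τ) :
    (∀ l : ℕ, (cubeW n τ l).IsSymm ∧ DoublyStochastic (cubeW n τ l)) ∧
    mprod (cubeW n τ) τ = Jmat n := by
  subst hn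
  exact ⟨fun l => ⟨cubeW_isSymm _ τ l, doublyStochastic_cubeW hτ l⟩, mprod_cubeW_self τ⟩
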